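/- Let A be an n-by-n reciprocal matrix. Then the geometric mean of all n columns of A, i.e., the vector w with w_i = (∏_{j=1}^n a_ij)^{1/n}, is efficient for A. -/

import Mathlib

/-- An n-by-n positive matrix is reciprocal if `A j i = 1 / A i j` for all `i, j`. -/
def Reciprocal {n : ℕ} (A : Matrix (Fin n) (Fin n) ℝ) : Prop :=
  (∀ i j, 0 < A i j) ∧ ∀ i j, A j i = 1 / A i j

/-- A positive vector `w` is efficient for a reciprocal matrix `A` if every positive
vector `v` with `|v i / v j - A i j| ≤ |w i / w j - A i j|` entrywise is a positive
scalar multiple of `w`. -/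
def Efficient {n : ℕ} (A : Matrix (Fin n) (Fin n) ℝ) (w : Fin n → ℝ) : Prop :=
  ∀ v : Fin n → ℝ, (∀ i, 0 < v i) →
    (∀ i j, |v i / v j - A i j| ≤ |w i / w j - A i j|) →
    ∃ c : ℝ, 0 < c ∧ v = fun i => c * w i

/-!
Taking logarithms turns `A` into a skew-symmetric matrix `b` and the row geometric means into the
row averages `x` of `b`. These solve the normal equations of the least squares problem
`∑ i, ∑ j, (x i - x j - b i j) ^ 2`, whose minimizer is unique up to an additive constant. A vector
`v` at least as good as `w` entrywise approximates both `a_ij` and its reciprocal `a_ji` at least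
as well, which forces its error to be no larger on the logarithmic scale too. So `log v` is again a
minimizer, and `v` is a multiple of `w`.
-/

open scoped BigOperators

section LeastSquares

variable {ι : Type*} [Fintype ι]

/-- The least squares objective for approximating a matrix `b` by the difference matrix
`x i - x j` of a vector `x`. For `b = log A` and `x = log w` it is the logarithmic least squares
error of the weight vector `w`. -/
def leastSquaresError {R : Type*} [CommRing R] (b : Matrix ι ι R) (x : ι → R) : R :=
  ∑ i, ∑ j, (x i - x j - b i j) ^ 2

lemma sum_sum_sub_mul_eq_zero {R : Type*} [NonUnitalNonAssocRing R] {r : Matrix ι ι R}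
    (hrow : ∀ i, ∑ j, r i j = 0) (hcol : ∀ j, ∑ i, r i j = 0) (d e : ι → R) :
    ∑ i, ∑ j, (d i - e j) * r i j = 0 := by
  have hd : ∑ i, ∑ j, d i * r i j = 0 := by
    simp only [← Finset.mul_sum, hrow, mul_zero, Finset.sum_const_zero]
  have he : ∑ i, ∑ j, e j * r i j = 0 := by
    rw [Finset.sum_comm]
    simp only [← Finset.mul_sum, hcol, mul_zero, Finset.sum_const_zero]
  simp only [sub_mul, Finset.sum_sub_distrib, hd, he, sub_zero]

lemma leastSquaresError_eq_add {R : Type*} [CommRing R] {b : Matrix ι ι R} {x : ι → R}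
    (hrow : ∀ i, ∑ j, (x i - x j - b i j) = 0) (hcol : ∀ j, ∑ i, (x i - x j - b i j) = 0)
    (y : ι → R) :
    leastSquaresError b y = leastSquaresError b x + leastSquaresError 0 (y - x) := by
  -- Pythagoras: the residual of `x` is orthogonal to every difference matrix.
  have hcross : ∑ i, ∑ j, 2 * (((y - x) i - (y - x) j) * (x i - x j - b i j)) = 0 := by
    simp only [← Finset.mul_sum]
    rw [sum_sum_sub_mul_eq_zero (r := fun i j ↦ x i - x j - b i j) hrow hcol, mul_zero]
  rw [← add_zero (leastSquaresError b x + _), ← hcross]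
  simp only [leastSquaresError, ← Finset.sum_add_distrib]
  refine Finset.sum_congr rfl fun i _ ↦ Finset.sum_congr rfl fun j _ ↦ ?_
  simp only [Pi.sub_apply, Matrix.zero_apply]
  ring

section Ordered

variable {R : Type*} [CommRing R] [LinearOrder R] [IsStrictOrderedRing R]

lemma leastSquaresError_le_of_abs_le {b : Matrix ι ι R} {x y : ι → R}
    (h : ∀ i j, |y i - y j - b i j| ≤ |x i - x j - b i j|) :
    leastSquaresError b y ≤ leastSquaresError b x :=
  Finset.sum_le_sum fun i _ ↦ Finset.sum_le_sum fun j _ ↦ sq_le_sq.mpr (h i j)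

lemma exists_forall_eq_of_leastSquaresError_zero_nonpos {d : ι → R}
    (h : leastSquaresError 0 d ≤ 0) : ∃ c, ∀ i, d i = c := by
  have hrow_nonneg (i : ι) : 0 ≤ ∑ j, (d i - d j - (0 : Matrix ι ι R) i j) ^ 2 :=
    Finset.sum_nonneg fun j _ ↦ sq_nonneg _
  have hrow (i : ι) : ∑ j, (d i - d j - (0 : Matrix ι ι R) i j) ^ 2 = 0 :=
    congrFun ((Fintype.sum_eq_zero_iff_of_nonneg hrow_nonneg).mp
      (h.antisymm (Fintype.sum_nonneg hrow_nonneg))) i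
  have hpair (i j : ι) : d i = d j := by
    have hsq := congrFun ((Fintype.sum_eq_zero_iff_of_nonneg fun j ↦ sq_nonneg _).mp (hrow i)) j
    simpa [sub_eq_zero] using hsq
  cases isEmpty_or_nonempty ι with
  | inl _ => exact ⟨0, isEmptyElim⟩
  | inr hι => exact hι.elim fun i₀ ↦ ⟨d i₀, fun i ↦ hpair i i₀⟩

end Ordered

section RowMean

variable {K : Type*} [Field K]

lemma sum_expect_sub_expect_sub_eq_zero [CharZero K] {b : Matrix ι ι K}
    (hb : ∀ i j, b j i = -b i j) (i : ι) :
    ∑ j, ((𝔼 k, b i k) - (𝔼 k, b j k) - b i j) = 0 := by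
  have htotal : 𝔼 j, 𝔼 k, b j k = 0 := by
    have hneg : 𝔼 j, 𝔼 k, b j k = -𝔼 j, 𝔼 k, b j k :=
      calc 𝔼 j, 𝔼 k, b j k = 𝔼 k, 𝔼 j, b j k := Finset.expect_comm _ _ _
        _ = 𝔼 k, 𝔼 j, -b k j :=
          Finset.expect_congr rfl fun k _ ↦ Finset.expect_congr rfl fun j _ ↦ hb k j
        _ = -𝔼 j, 𝔼 k, b j k := by simp only [Finset.expect_neg_distrib]
    exact self_eq_neg.mp hneg
  have : Nonempty ι := ⟨i⟩
  rw [← Fintype.card_smul_expect, Finset.expect_sub_distrib, Finset.expect_sub_distrib,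
    Fintype.expect_const, htotal, sub_zero, sub_self, smul_zero]

lemma exists_eq_add_expect_of_leastSquaresError_le [LinearOrder K] [IsStrictOrderedRing K]
    {b : Matrix ι ι K} (hb : ∀ i j, b j i = -b i j) {y : ι → K}
    (hy : leastSquaresError b y ≤ leastSquaresError b fun i ↦ 𝔼 j, b i j) :
    ∃ c, ∀ i, y i = c + 𝔼 j, b i j := by
  have hrow := sum_expect_sub_expect_sub_eq_zero hb
  have hcol (j : ι) : ∑ i, ((𝔼 k, b i k) - (𝔼 k, b j k) - b i j) = 0 := by
    rw [← neg_eq_zero, ← Finset.sum_neg_distrib, ← hrow j]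
    refine Finset.sum_congr rfl fun i _ ↦ ?_
    rw [hb j i]
    ring
  rw [leastSquaresError_eq_add hrow hcol, add_le_iff_nonpos_right] at hy
  obtain ⟨c, hc⟩ := exists_forall_eq_of_leastSquaresError_zero_nonpos hy
  exact ⟨c, fun i ↦ sub_eq_iff_eq_add.mp (hc i)⟩

end RowMean

end LeastSquares

lemma sq_le_mul_of_inv_add_inv_le {K : Type*} [Field K] [LinearOrder K] [IsStrictOrderedRing K]
    {r s a : K} (hr : 0 < r) (hs : 0 < s) (ha : 0 < a) (h : r⁻¹ + s⁻¹ ≤ 2 * a⁻¹) :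
    a ^ 2 ≤ r * s := by
  have hinv : (r * s)⁻¹ ≤ (a ^ 2)⁻¹ :=
    calc (r * s)⁻¹ = r⁻¹ * s⁻¹ := mul_inv r s
      _ ≤ ((r⁻¹ + s⁻¹) / 2) ^ 2 := by linarith [four_mul_le_sq_add r⁻¹ s⁻¹]
      _ ≤ a⁻¹ ^ 2 := by gcongr; linarith
      _ = (a ^ 2)⁻¹ := inv_pow a 2
  exact (inv_le_inv₀ (by positivity) (by positivity)).mp hinv

section LogDistance

variable {r s a : ℝ}

lemma abs_log_sub_log_le_of_le (hr : 0 < r) (ha : 0 < a) (has : a ≤ s)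
    (h : |r - a| ≤ |s - a|) (hinv : |r⁻¹ - a⁻¹| ≤ |s⁻¹ - a⁻¹|) :
    |Real.log r - Real.log a| ≤ |Real.log s - Real.log a| := by
  have hs : 0 < s := ha.trans_le has
  rw [abs_of_nonneg (sub_nonneg.mpr has)] at h
  rw [abs_of_nonpos (sub_nonpos.mpr (inv_anti₀ ha has))] at hinv
  have hrs : r ≤ s := by linarith [le_of_abs_le h]
  have hsq : a ^ 2 ≤ r * s :=
    sq_le_mul_of_inv_add_inv_le hr hs ha (by linarith [le_of_abs_le hinv])
  have hlog : 2 * Real.log a ≤ Real.log r + Real.log s := by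
    rw [← Real.log_mul hr.ne' hs.ne']
    simpa using Real.log_le_log (by positivity) hsq
  refine le_trans (abs_le.mpr ⟨?_, ?_⟩) (le_abs_self _)
  · linarith
  · linarith [Real.log_le_log hr hrs]

lemma abs_log_sub_log_le (hr : 0 < r) (hs : 0 < s) (ha : 0 < a)
    (h : |r - a| ≤ |s - a|) (hinv : |r⁻¹ - a⁻¹| ≤ |s⁻¹ - a⁻¹|) :
    |Real.log r - Real.log a| ≤ |Real.log s - Real.log a| := by
  rcases le_total a s with has | hsa
  · exact abs_log_sub_log_le_of_le hr ha has h hinv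
  · -- Inversion swaps the two hypotheses, reverses the order and preserves the log distance.
    have := abs_log_sub_log_le_of_le (inv_pos.mpr hr) (inv_pos.mpr ha) (inv_anti₀ hs hsa) hinv
      (by simpa only [inv_inv] using h)
    simpa only [Real.log_inv, neg_sub_neg, abs_sub_comm (Real.log a)] using this

end LogDistance

lemma log_prod_rpow_one_div_card {ι : Type*} [Fintype ι] {f : ι → ℝ} (hf : ∀ i, 0 < f i) :
    Real.log ((∏ i, f i) ^ ((1 : ℝ) / Fintype.card ι)) = 𝔼 i, Real.log (f i) := by
  rw [Real.log_rpow (Finset.prod_pos fun i _ ↦ hf i), Real.log_prod fun i _ ↦ (hf i).ne',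
    Fintype.expect_eq_sum_div_card, one_div_mul_eq_div]

namespace Reciprocal

variable {n : ℕ} {A : Matrix (Fin n) (Fin n) ℝ}

lemma map_log_skew (hA : Reciprocal A) (i j : Fin n) :
    A.map Real.log j i = -A.map Real.log i j := by
  simp only [Matrix.map_apply, hA.2 i j, one_div, Real.log_inv]

lemma abs_log_sub_le (hA : Reciprocal A) {v w : Fin n → ℝ} (hv : ∀ i, 0 < v i)
    (hw : ∀ i, 0 < w i) (h : ∀ i j, |v i / v j - A i j| ≤ |w i / w j - A i j|) (i j : Fin n) :
    |Real.log (v i) - Real.log (v j) - A.map Real.log i j| ≤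
      |Real.log (w i) - Real.log (w j) - A.map Real.log i j| := by
  have hinv : |(v i / v j)⁻¹ - (A i j)⁻¹| ≤ |(w i / w j)⁻¹ - (A i j)⁻¹| := by
    simpa only [inv_div, hA.2 i j, one_div] using h j i
  simpa only [Matrix.map_apply, Real.log_div (hv _).ne' (hv _).ne',
    Real.log_div (hw _).ne' (hw _).ne'] using
    abs_log_sub_log_le (div_pos (hv i) (hv j)) (div_pos (hw i) (hw j)) (hA.1 i j) (h i j) hinv

lemma efficient_of_unique_log_minimizer (hA : Reciprocal A) {w : Fin n → ℝ} (hw : ∀ i, 0 < w i)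
    (hmin : ∀ y, leastSquaresError (A.map Real.log) y ≤
        leastSquaresError (A.map Real.log) (fun i ↦ Real.log (w i)) →
      ∃ c, ∀ i, y i = c + Real.log (w i)) :
    Efficient A w := by
  intro v hv h
  obtain ⟨c, hc⟩ := hmin (fun i ↦ Real.log (v i))
    (leastSquaresError_le_of_abs_le (hA.abs_log_sub_le hv hw h))
  refine ⟨Real.exp c, Real.exp_pos c, funext fun i ↦ ?_⟩
  rw [← Real.exp_log (hv i), hc i, Real.exp_add, Real.exp_log (hw i)]

end Reciprocal

/-- The geometric mean of all columns of a reciprocal matrix is efficient for it. -/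
theorem stmt_10 {n : ℕ} (A : Matrix (Fin n) (Fin n) ℝ) (hA : Reciprocal A) :
    Efficient A (fun i => (∏ j, A i j) ^ ((1 : ℝ) / n)) := by
  have hlog (i : Fin n) :
      Real.log ((∏ j, A i j) ^ ((1 : ℝ) / n)) = 𝔼 j, A.map Real.log i j := by
    simpa only [Fintype.card_fin, Matrix.map_apply] using log_prod_rpow_one_div_card (hA.1 i)
  refine hA.efficient_of_unique_log_minimizer
    (fun i ↦ Real.rpow_pos_of_pos (Finset.prod_pos fun j _ ↦ hA.1 i j) _) fun y hy ↦ ?_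
  simp only [hlog] at hy ⊢
  exact exists_eq_add_expect_of_leastSquaresError_le hA.map_log_skew hy
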